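/- There exists a constant C > 1 such that for every integer x ≥ 1 and every element W of N(∞) with |W| ≤ x, W can be written as a product of at most C·x² conjugates of elements of R*(∞) ∪ R*(∞)⁻¹. That is, the Dehn 2-function of the presentation ⟨a, b, c, d ∥ R*(∞)⟩ of the Grigorchuk 2-group is bounded from above by a quadratic function. -/

import Mathlib

/-- The four-letter alphabet `{a, b, c, d}`. -/
inductive L4 : Type
  | a | b | c | d
  deriving DecidableEq

/-- The free group `F = F(a, b, c, d)`. -/
abbrev F4 : Type := FreeGroup L4

def ga : F4 := FreeGroup.of L4.a
def gb : F4 := FreeGroup.of L4.b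
def gc : F4 := FreeGroup.of L4.c
def gd : F4 := FreeGroup.of L4.d

/-- The endomorphism `σ` of `F(a,b,c,d)`:
`σ(a) = aca`, `σ(b) = d`, `σ(c) = b`, `σ(d) = c`. -/
def sigma : F4 →* F4 :=
  FreeGroup.lift fun x => match x with
    | L4.a => ga * gc * ga
    | L4.b => gd
    | L4.c => gb
    | L4.d => gc

/-- The Lysenok relator set
`R(∞) = {a², b², c², d², bcd} ∪ {σⁱ((ad)⁴) : i ≥ 0} ∪ {σⁱ((adacac)⁴) : i ≥ 0}`. -/
def Rinf : Set F4 :=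
  {ga ^ 2, gb ^ 2, gc ^ 2, gd ^ 2, gb * gc * gd}
    ∪ {w | ∃ i : ℕ, w = (⇑sigma)^[i] ((ga * gd) ^ 4)}
    ∪ {w | ∃ i : ℕ, w = (⇑sigma)^[i] ((ga * gd * ga * gc * ga * gc) ^ 4)}

/-- `W` is a product of `L` conjugates of elements of `R ∪ R⁻¹`. -/
def IsProdConjPM {G : Type*} [Group G] (R : Set G) (L : ℕ) (W : G) : Prop :=
  ∃ f : Fin L → G,
    (∀ j, ∃ x r, r ∈ R ∧ (f j = x * r * x⁻¹ ∨ f j = x * r⁻¹ * x⁻¹)) ∧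
    W = (List.ofFn f).prod

/-- The extended relator set `R*(∞) = R(∞) ∪ {σⁱ(a²) : i ≥ 1}`. -/
def RinfStar : Set F4 :=
  Rinf ∪ {w | ∃ i : ℕ, 1 ≤ i ∧ w = (⇑sigma)^[i] (ga ^ 2)}

/-!
The Grigorchuk group acts on the binary tree, and an element fixing the first level is determined by
its sections on the two halves. The pair of sections of `σ(u)` is `(u, φ(u))`, where `φ` has finite
(dihedral) image in the group. A word `w` of length `n` representing `1`, with sections `w₀` and
`w₁`, is rewritten as `τ(V) σ(w₀)`, where `τ` is `σ` followed by conjugation by `a` and `V` is a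
product of at most `n` conjugates of `b` by elements of the dihedral subgroup; collecting the
factors costs `O(n²)` relators. On the other half of the tree the same collection process turns `w₁`
into `V φ(w₀)`, so the area of `V` is at most that of `w₁` up to `O(n²)`. The relators `σⁱ(a²)` make
`σ` and `τ` send relators to conjugates of relators, hence they do not increase area. Since the
sections of an alternating word have half its length, the area satisfies
`f(n) ≤ 2 f((n + 1) / 2) + O(n²)`, which gives `f(n) = O(n²)`.
-/

open scoped Pointwise

/-! ### Area of elements of a normal closure -/

section Area

variable {G H : Type*} [Group G] [Group H] {R : Set G} {S : Set H} {m n K : ℕ} {u v w u' v' : G}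

theorem isProdConjPM_iff_mem_pow :
    IsProdConjPM R n w ↔ w ∈ Group.conjugatesOfSet (R ∪ R⁻¹) ^ n := by
  have mem_conjugates (y : G) : y ∈ Group.conjugatesOfSet (R ∪ R⁻¹) ↔
      ∃ x r, r ∈ R ∧ (y = x * r * x⁻¹ ∨ y = x * r⁻¹ * x⁻¹) := by
    simp only [Group.mem_conjugatesOfSet_iff, isConj_iff]
    constructor
    · rintro ⟨r, hr | hr, x, rfl⟩
      · exact ⟨x, r, hr, .inl rfl⟩
      · exact ⟨x, r⁻¹, hr, .inr (by rw [inv_inv])⟩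
    · rintro ⟨x, r, hr, rfl | rfl⟩
      · exact ⟨r, .inl hr, x, rfl⟩
      · exact ⟨r⁻¹, .inr (Set.inv_mem_inv.2 hr), x, rfl⟩
  rw [Set.mem_pow]
  constructor
  · rintro ⟨f, hf, rfl⟩
    exact ⟨fun j => ⟨f j, (mem_conjugates _).2 (hf j)⟩, rfl⟩
  · rintro ⟨f, rfl⟩
    exact ⟨fun j => f j, fun j => (mem_conjugates _).1 (f j).2, rfl⟩

/-- `w` bounds a van Kampen diagram of area at most `n` over the relators `R`: it is a product of
at most `n` conjugates of elements of `R ∪ R⁻¹`. -/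
def AreaLE (R : Set G) (n : ℕ) (w : G) : Prop :=
  ∃ L ≤ n, IsProdConjPM R L w

namespace AreaLE

theorem one (n : ℕ) : AreaLE R n 1 :=
  ⟨0, n.zero_le, isProdConjPM_iff_mem_pow.2 (by simp)⟩

theorem of_mem_conjugatesOfSet (hw : w ∈ Group.conjugatesOfSet R) : AreaLE R 1 w :=
  ⟨1, le_rfl, isProdConjPM_iff_mem_pow.2 <| by
    rw [pow_one]; exact Group.conjugatesOfSet_mono Set.subset_union_left hw⟩

theorem mono (h : AreaLE R m w) (hmn : m ≤ n) : AreaLE R n w :=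
  let ⟨L, hL, hw⟩ := h
  ⟨L, hL.trans hmn, hw⟩

theorem mul (hu : AreaLE R m u) (hv : AreaLE R n v) : AreaLE R (m + n) (u * v) := by
  obtain ⟨k, hk, hu⟩ := hu
  obtain ⟨l, hl, hv⟩ := hv
  refine ⟨k + l, add_le_add hk hl, ?_⟩
  rw [isProdConjPM_iff_mem_pow] at *
  rw [pow_add]
  exact Set.mul_mem_mul hu hv

theorem inv (h : AreaLE R n w) : AreaLE R n w⁻¹ := by
  obtain ⟨L, hL, hw⟩ := h
  refine ⟨L, hL, ?_⟩
  have conjugates_inv :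
      (Group.conjugatesOfSet (R ∪ R⁻¹))⁻¹ ⊆ Group.conjugatesOfSet (R ∪ R⁻¹) := by
    intro y hy
    obtain ⟨r, hr, hry⟩ := Group.mem_conjugatesOfSet_iff.1 hy
    obtain ⟨x, hx⟩ := isConj_iff.1 hry
    exact Group.mem_conjugatesOfSet_iff.2
      ⟨r⁻¹, by simpa [or_comm] using hr, isConj_iff.2 ⟨x, by rw [← conj_inv, hx, inv_inv]⟩⟩
  rw [isProdConjPM_iff_mem_pow] at *
  apply Set.pow_subset_pow_left conjugates_inv
  rwa [inv_pow, Set.inv_mem_inv]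

theorem map (f : G →* H) (hf : Set.MapsTo f R (Group.conjugatesOfSet S)) (h : AreaLE R n w) :
    AreaLE S n (f w) := by
  obtain ⟨L, hL, hw⟩ := h
  refine ⟨L, hL, ?_⟩
  have image_conjugates : f '' Group.conjugatesOfSet (R ∪ R⁻¹) ⊆
      Group.conjugatesOfSet (S ∪ S⁻¹) := by
    rintro _ ⟨y, hy, rfl⟩
    obtain ⟨r, hr, hry⟩ := Group.mem_conjugatesOfSet_iff.1 hy
    rw [Group.conjugatesOfSet_union]
    rcases hr with hr | hr
    · obtain ⟨s, hs, hsr⟩ := Group.mem_conjugatesOfSet_iff.1 (hf hr)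
      exact .inl (Group.mem_conjugatesOfSet_iff.2 ⟨s, hs, hsr.trans (f.map_isConj hry)⟩)
    · obtain ⟨s, hs, hsr⟩ := Group.mem_conjugatesOfSet_iff.1 (hf hr)
      refine .inr (Group.mem_conjugatesOfSet_iff.2 ⟨s⁻¹, Set.inv_mem_inv.2 hs, ?_⟩)
      obtain ⟨x, hx⟩ := isConj_iff.1 hsr
      refine (isConj_iff.2 ⟨x, ?_⟩ : IsConj s⁻¹ (f r)).trans (f.map_isConj hry)
      rw [← conj_inv, hx, map_inv, inv_inv]
  rw [isProdConjPM_iff_mem_pow] at *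
  apply Set.pow_subset_pow_left image_conjugates
  rw [← Set.image_pow]
  exact Set.mem_image_of_mem f hw

theorem conj (h : AreaLE R n w) (x : G) : AreaLE R n (x * w * x⁻¹) :=
  h.map (MulAut.conj x).toMonoidHom fun _ hr =>
    Group.conj_mem_conjugatesOfSet (Group.subset_conjugatesOfSet hr)

theorem mem_normalClosure (h : AreaLE R n w) : w ∈ Subgroup.normalClosure R := by
  obtain ⟨L, -, f, hf, rfl⟩ := h
  refine Subgroup.list_prod_mem _ fun y hy => ?_
  obtain ⟨j, rfl⟩ := List.mem_ofFn.1 hy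
  obtain ⟨x, r, hr, hfj | hfj⟩ := hf j <;> rw [hfj] <;>
    refine Subgroup.normalClosure_normal.conj_mem _ ?_ x
  · exact Subgroup.subset_normalClosure hr
  · exact inv_mem (Subgroup.subset_normalClosure hr)

end AreaLE

theorem mem_normalClosure_iff_exists_areaLE :
    w ∈ Subgroup.normalClosure R ↔ ∃ n, AreaLE R n w := by
  refine ⟨fun h => ?_, fun ⟨_, h⟩ => h.mem_normalClosure⟩
  induction h using Subgroup.closure_induction with
  | mem x hx => exact ⟨1, .of_mem_conjugatesOfSet hx⟩
  | one => exact ⟨0, .one 0⟩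
  | mul x y _ _ hx hy => exact ⟨_, hx.choose_spec.mul hy.choose_spec⟩
  | inv x _ hx => exact ⟨_, hx.choose_spec.inv⟩

/-- `u` can be rewritten into `v` by at most `n` applications of relators from `R`. -/
def AreaEquiv (R : Set G) (n : ℕ) (u v : G) : Prop :=
  AreaLE R n (u * v⁻¹)

namespace AreaEquiv

theorem of_eq (h : u = v) (n : ℕ) : AreaEquiv R n u v := by
  rw [AreaEquiv, h, mul_inv_cancel]
  exact .one n

theorem refl (u : G) : AreaEquiv R 0 u u := of_eq rfl 0

theorem mono (h : AreaEquiv R m u v) (hmn : m ≤ n) : AreaEquiv R n u v := AreaLE.mono h hmn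

theorem symm (h : AreaEquiv R n u v) : AreaEquiv R n v u := by
  simpa [AreaEquiv] using AreaLE.inv h

theorem trans (huv : AreaEquiv R m u v) (hvw : AreaEquiv R n v w) :
    AreaEquiv R (m + n) u w := by
  simpa [AreaEquiv, mul_assoc] using AreaLE.mul huv hvw

instance : Trans (AreaEquiv R m) (AreaEquiv R n) (AreaEquiv R (m + n)) := ⟨trans⟩

theorem mul (hu : AreaEquiv R m u u') (hv : AreaEquiv R n v v') :
    AreaEquiv R (m + n) (u * v) (u' * v') := by
  rw [add_comm]
  simpa [AreaEquiv, mul_assoc] using (AreaLE.conj hv u).mul hu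

theorem mul_left (u : G) (h : AreaEquiv R n v v') : AreaEquiv R n (u * v) (u * v') := by
  simpa using (refl u).mul h

theorem mul_right (h : AreaEquiv R n u u') (v : G) : AreaEquiv R n (u * v) (u' * v) :=
  h.mul (refl v)

theorem areaLE (huv : AreaEquiv R m u v) (hv : AreaLE R n v) : AreaLE R (m + n) u := by
  simpa [AreaEquiv, mul_assoc] using AreaLE.mul huv hv

theorem list_prod {α : Type*} {f g : α → G} (h : ∀ x, AreaEquiv R K (f x) (g x)) (l : List α) :
    AreaEquiv R (K * l.length) (l.map f).prod (l.map g).prod := by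
  induction l with
  | nil => exact refl 1
  | cons x l ih =>
    rw [List.map_cons, List.map_cons, List.prod_cons, List.prod_cons, List.length_cons, mul_add_one,
      add_comm]
    exact (h x).mul ih

theorem mul_list_prod {α : Type*} {f g : α → G} (h : ∀ x, AreaEquiv R K (u * f x) (g x * u))
    (l : List α) : AreaEquiv R (K * l.length) (u * (l.map f).prod) ((l.map g).prod * u) := by
  induction l with
  | nil => simpa using refl u
  | cons x l ih =>
    rw [List.map_cons, List.map_cons, List.prod_cons, List.prod_cons, List.length_cons, mul_add_one,
      add_comm]
    calc AreaEquiv R K (u * (f x * (l.map f).prod)) (g x * (u * (l.map f).prod)) := by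
          simpa only [mul_assoc] using (h x).mul_right _
      AreaEquiv R (K * l.length) _ (g x * (l.map g).prod * u) := by
          simpa only [mul_assoc] using ih.mul_left (g x)

end AreaEquiv

theorem exists_forall_areaLE {ι : Type*} [Finite ι] {w : ι → G}
    (h : ∀ i, w i ∈ Subgroup.normalClosure R) : ∃ K, ∀ i, AreaLE R K (w i) := by
  choose k hk using fun i => mem_normalClosure_iff_exists_areaLE.1 (h i)
  obtain ⟨K, hK⟩ := Finite.bddAbove_range k
  exact ⟨K, fun i => (hk i).mono (hK (Set.mem_range_self i))⟩

end Area

section Presentation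

variable {α : Type*} {rels : Set (FreeGroup α)}

theorem presentedGroup_mk_eq_mk_iff {u v : FreeGroup α} :
    PresentedGroup.mk rels u = PresentedGroup.mk rels v ↔ ∃ n, AreaEquiv rels n u v := by
  rw [← mul_inv_eq_one, ← map_inv, ← map_mul, PresentedGroup.mk_eq_one_iff]
  exact mem_normalClosure_iff_exists_areaLE

theorem exists_forall_areaEquiv {ι : Type*} [Finite ι] {u v : ι → FreeGroup α}
    (h : ∀ i, PresentedGroup.mk rels (u i) = PresentedGroup.mk rels (v i)) :
    ∃ K, ∀ i, AreaEquiv rels K (u i) (v i) :=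
  exists_forall_areaLE fun i => mem_normalClosure_iff_exists_areaLE.2
    (presentedGroup_mk_eq_mk_iff.1 (h i))

end Presentation

section Involutions

variable {G : Type*} [Group G] {s t : G}

theorem mul_mul_cancel_of_mul_self (hs : s * s = 1) (g : G) : s * (s * g) = g := by
  rw [← mul_assoc, hs, one_mul]

theorem commute_conj_of_mul_pow_four (hs : s * s = 1) (ht : t * t = 1) (hst : (s * t) ^ 4 = 1) :
    Commute s (t * s * t) := by
  have sq_eq_inv : (s * t) ^ 2 = ((s * t) ^ 2)⁻¹ := by
    rw [eq_inv_iff_mul_eq_one, ← pow_add, hst]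
  simpa [Commute, SemiconjBy, pow_two, inv_eq_of_mul_eq_one_left hs, inv_eq_of_mul_eq_one_left ht,
    mul_assoc] using sq_eq_inv

/-- Powers of an element `g` with `g ^ n = 1`, with exponents in `ZMod n`. -/
def zmodPowersHom {n : ℕ} (g : G) (hg : g ^ n = 1) : ZMod n →+ Additive G :=
  ZMod.lift n ⟨zmultiplesHom (Additive G) (.ofMul g), by simp [← ofMul_pow, hg]⟩

theorem toMul_zmodPowersHom {n : ℕ} [NeZero n] (g : G) (hg : g ^ n = 1) (i : ZMod n) :
    (zmodPowersHom g hg i).toMul = g ^ i.val := by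
  conv_lhs => rw [← ZMod.natCast_zmod_val i, ← Int.cast_natCast, zmodPowersHom, ZMod.lift_coe]
  simp only [zmultiplesHom_apply, toMul_zsmul, toMul_ofMul, zpow_natCast]

theorem toMul_zmodPowersHom_mul {n : ℕ} (hs : s * s = 1) (ht : t * t = 1) (hst : (s * t) ^ n = 1)
    (i : ZMod n) : (zmodPowersHom (s * t) hst i).toMul * s =
      s * (zmodPowersHom (s * t) hst (-i)).toMul := by
  obtain ⟨k, rfl⟩ := ZMod.intCast_surjective i
  have conj_eq_inv : s * (s * t) * s⁻¹ = (s * t)⁻¹ := by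
    rw [mul_inv_rev, inv_eq_of_mul_eq_one_left hs, inv_eq_of_mul_eq_one_left ht,
      mul_mul_cancel_of_mul_self hs]
  have h := conj_zpow (i := -k) (a := s) (b := s * t)
  rw [conj_eq_inv, inv_zpow', neg_neg] at h
  rw [← Int.cast_neg]
  simp only [zmodPowersHom, ZMod.lift_coe, zmultiplesHom_apply, toMul_zsmul, toMul_ofMul]
  rw [h, inv_mul_cancel_right]

/-- The homomorphism from a dihedral group given by two involutions `s`, `t` with
`(s * t) ^ n = 1`; it sends `sr 0` to `s` and `r 1` to `s * t`. -/
def dihedralLift {n : ℕ} (hs : s * s = 1) (ht : t * t = 1) (hst : (s * t) ^ n = 1) :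
    DihedralGroup n →* G :=
  .mk' (fun
    | .r i => (zmodPowersHom (s * t) hst i).toMul
    | .sr i => s * (zmodPowersHom (s * t) hst i).toMul) <| by
    rintro (i | i) (j | j)
    · simp
    · simp only [DihedralGroup.r_mul_sr, ← mul_assoc, toMul_zmodPowersHom_mul hs ht]
      simp [sub_eq_neg_add, mul_assoc]
    · simp [mul_assoc]
    · rw [DihedralGroup.sr_mul_sr, ← mul_assoc, mul_assoc s, toMul_zmodPowersHom_mul hs ht,
        mul_mul_cancel_of_mul_self hs]
      simp [sub_eq_neg_add]

end Involutions

/-! ### The Grigorchuk group and the substitution `σ` -/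

/-- The Grigorchuk group, presented by the extended relator set `R*(∞)`. -/
abbrev GrigorchukGroup : Type := PresentedGroup RinfStar

namespace GrigorchukGroup

/-- The canonical projection of the free group onto the Grigorchuk group. -/
abbrev mk : F4 →* GrigorchukGroup := PresentedGroup.mk RinfStar

/-- The generator `a` of the Grigorchuk group. -/
abbrev a : GrigorchukGroup := mk ga

/-- The generator `b` of the Grigorchuk group. -/
abbrev b : GrigorchukGroup := mk gb

/-- The generator `c` of the Grigorchuk group. -/
abbrev c : GrigorchukGroup := mk gc

/-- The generator `d` of the Grigorchuk group. -/
abbrev d : GrigorchukGroup := mk gd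

theorem a_mul_a : a * a = 1 := by
  rw [← map_mul, ← pow_two]
  exact PresentedGroup.one_of_mem (by simp [RinfStar, Rinf])

theorem b_mul_b : b * b = 1 := by
  rw [← map_mul, ← pow_two]
  exact PresentedGroup.one_of_mem (by simp [RinfStar, Rinf])

theorem c_mul_c : c * c = 1 := by
  rw [← map_mul, ← pow_two]
  exact PresentedGroup.one_of_mem (by simp [RinfStar, Rinf])

theorem d_mul_d : d * d = 1 := by
  rw [← map_mul, ← pow_two]
  exact PresentedGroup.one_of_mem (by simp [RinfStar, Rinf])

theorem b_mul_c_mul_d : b * c * d = 1 := by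
  rw [← map_mul, ← map_mul]
  exact PresentedGroup.one_of_mem (by simp [RinfStar, Rinf])

theorem a_mul_d_pow_four : (a * d) ^ 4 = 1 := by
  rw [← map_mul, ← map_pow]
  exact PresentedGroup.one_of_mem (.inl (.inl (.inr ⟨0, rfl⟩)))

theorem adacac_pow_four : (a * d * a * c * a * c) ^ 4 = 1 := by
  simp only [← map_mul, ← map_pow]
  exact PresentedGroup.one_of_mem (.inl (.inr ⟨0, rfl⟩))

theorem a_inv : a⁻¹ = a := inv_eq_of_mul_eq_one_left a_mul_a
theorem b_inv : b⁻¹ = b := inv_eq_of_mul_eq_one_left b_mul_b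
theorem c_inv : c⁻¹ = c := inv_eq_of_mul_eq_one_left c_mul_c
theorem d_inv : d⁻¹ = d := inv_eq_of_mul_eq_one_left d_mul_d

theorem a_mul_a_mul (g : GrigorchukGroup) : a * (a * g) = g := mul_mul_cancel_of_mul_self a_mul_a g
theorem c_mul_c_mul (g : GrigorchukGroup) : c * (c * g) = g := mul_mul_cancel_of_mul_self c_mul_c g
theorem d_mul_d_mul (g : GrigorchukGroup) : d * (d * g) = g := mul_mul_cancel_of_mul_self d_mul_d g

theorem b_eq : b = c * d := by
  rw [← b_inv, inv_eq_iff_mul_eq_one, ← mul_assoc, b_mul_c_mul_d]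

theorem commute_d_c : Commute d c := by
  have h := b_inv
  rwa [b_eq, mul_inv_rev, c_inv, d_inv] at h

theorem d_mul_c_mul (g : GrigorchukGroup) : d * (c * g) = c * (d * g) := commute_d_c.left_comm g

theorem commute_d_b : Commute d b := by
  rw [b_eq]
  exact commute_d_c.mul_right (Commute.refl d)

end GrigorchukGroup

theorem freeGroup_of_a : FreeGroup.of L4.a = ga := rfl
theorem freeGroup_of_b : FreeGroup.of L4.b = gb := rfl
theorem freeGroup_of_c : FreeGroup.of L4.c = gc := rfl
theorem freeGroup_of_d : FreeGroup.of L4.d = gd := rfl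

theorem sigma_ga : sigma ga = ga * gc * ga := by simp [sigma, ga]
theorem sigma_gb : sigma gb = gd := by simp [sigma, gb]
theorem sigma_gc : sigma gc = gb := by simp [sigma, gc]
theorem sigma_gd : sigma gd = gc := by simp [sigma, gd]

theorem mem_RinfStar_cases {r : F4} (hr : r ∈ RinfStar) :
    r ∈ ({ga ^ 2, gb ^ 2, gc ^ 2, gd ^ 2, gb * gc * gd, (ga * gd) ^ 4,
      (ga * gd * ga * gc * ga * gc) ^ 4} : Set F4) ∨ ∃ s ∈ RinfStar, r = sigma s := by
  rcases hr with ((hr | ⟨i, rfl⟩) | ⟨i, rfl⟩) | ⟨i, hi, rfl⟩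
  · exact .inl (by simp only [Set.mem_insert_iff, Set.mem_singleton_iff] at hr ⊢; tauto)
  · cases i with
    | zero => exact .inl (by simp)
    | succ i => exact .inr ⟨_, .inl (.inl (.inr ⟨i, rfl⟩)), Function.iterate_succ_apply' ..⟩
  · cases i with
    | zero => exact .inl (by simp)
    | succ i => exact .inr ⟨_, .inl (.inr ⟨i, rfl⟩), Function.iterate_succ_apply' ..⟩
  · obtain ⟨i, rfl⟩ := Nat.exists_eq_add_of_le' hi
    refine .inr ⟨_, ?_, Function.iterate_succ_apply' ..⟩
    cases i with
    | zero => simp [RinfStar, Rinf]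
    | succ i => exact .inr ⟨i + 1, i.succ_pos, rfl⟩

-- The only relator that `σ` does not send to another relator is `bcd`: its image `dbc` is conjugate
-- to it.
theorem mapsTo_sigma_RinfStar : Set.MapsTo sigma RinfStar (Group.conjugatesOfSet RinfStar) := by
  rintro r (((hr | ⟨i, rfl⟩) | ⟨i, rfl⟩) | ⟨i, -, rfl⟩)
  · simp only [Set.mem_insert_iff, Set.mem_singleton_iff] at hr
    rcases hr with rfl | rfl | rfl | rfl | rfl
    · exact Group.subset_conjugatesOfSet (.inr ⟨1, le_rfl, rfl⟩)
    · exact Group.subset_conjugatesOfSet (by simp [sigma_gb, RinfStar, Rinf])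
    · exact Group.subset_conjugatesOfSet (by simp [sigma_gc, RinfStar, Rinf])
    · exact Group.subset_conjugatesOfSet (by simp [sigma_gd, RinfStar, Rinf])
    · exact Group.mem_conjugatesOfSet_iff.2 ⟨gb * gc * gd, by simp [RinfStar, Rinf],
        isConj_iff.2 ⟨gd, by simp [sigma_gb, sigma_gc, sigma_gd, mul_assoc]⟩⟩
  all_goals rw [← Function.iterate_succ_apply' sigma]
  · exact Group.subset_conjugatesOfSet (.inl (.inl (.inr ⟨i + 1, rfl⟩)))
  · exact Group.subset_conjugatesOfSet (.inl (.inr ⟨i + 1, rfl⟩))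
  · exact Group.subset_conjugatesOfSet (.inr ⟨i + 1, i.succ_pos, rfl⟩)

theorem AreaLE.sigma {n : ℕ} {w : F4} (h : AreaLE RinfStar n w) : AreaLE RinfStar n (sigma w) :=
  h.map _ mapsTo_sigma_RinfStar

/-- The endomorphism `σ` followed by conjugation by `a`. -/
def tau : F4 →* F4 := (MulAut.conj ga).toMonoidHom.comp sigma

theorem tau_apply (u : F4) : tau u = ga * sigma u * ga⁻¹ := rfl

theorem AreaLE.tau {n : ℕ} {w : F4} (h : AreaLE RinfStar n w) : AreaLE RinfStar n (tau w) :=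
  h.sigma.conj ga

/-- The endomorphism `a ↦ d`, `b ↦ 1`, `c ↦ a`, `d ↦ a`. It is the companion of `σ`: in the
decomposition of the Grigorchuk group on the two halves of the tree, `σ(u)` is the pair
`(u, φ(u))`. -/
def phi : F4 →* F4 :=
  FreeGroup.lift fun
    | .a => gd
    | .b => 1
    | .c => ga
    | .d => ga

theorem phi_ga : phi ga = gd := by simp [phi, ga]
theorem phi_gb : phi gb = 1 := by simp [phi, gb]
theorem phi_gc : phi gc = ga := by simp [phi, gc]
theorem phi_gd : phi gd = ga := by simp [phi, gd]

/-- The factorization of `φ` through the dihedral group of order `8`, the image of `φ` in the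
Grigorchuk group; the reflections `sr 0` and `sr 1` stand for `a` and `d`. -/
def toDihedral : F4 →* DihedralGroup 4 :=
  FreeGroup.lift fun
    | .a => .sr 1
    | .b => 1
    | .c => .sr 0
    | .d => .sr 0

theorem toDihedral_ga : toDihedral ga = .sr 1 := by simp [toDihedral, ga]
theorem toDihedral_gb : toDihedral gb = 1 := by simp [toDihedral, gb]
theorem toDihedral_gc : toDihedral gc = .sr 0 := by simp [toDihedral, gc]
theorem toDihedral_gd : toDihedral gd = .sr 0 := by simp [toDihedral, gd]

theorem toDihedral_iterate_sigma_sq (i : ℕ) (x : L4) :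
    toDihedral (sigma^[i] (FreeGroup.of x)) ^ 2 = 1 := by
  induction i generalizing x with
  | zero => cases x <;> simp [toDihedral, pow_two]
  | succ i ih =>
    have iterate_mul (u v : F4) : sigma^[i] (u * v) = sigma^[i] u * sigma^[i] v :=
      iterate_map_mul sigma i u v
    simp only [pow_two] at ih
    rw [Function.iterate_succ_apply]
    cases x
    · rw [freeGroup_of_a, sigma_ga, iterate_mul, iterate_mul, map_mul, map_mul, pow_two]
      have ha := ih .a
      have hc := ih .c
      rw [freeGroup_of_a] at ha
      rw [freeGroup_of_c] at hc
      simp only [mul_assoc, mul_mul_cancel_of_mul_self ha, mul_mul_cancel_of_mul_self hc, ha]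
    · rw [freeGroup_of_b, sigma_gb, pow_two]; exact ih .d
    · rw [freeGroup_of_c, sigma_gc, pow_two]; exact ih .b
    · rw [freeGroup_of_d, sigma_gd, pow_two]; exact ih .c

theorem toDihedral_eq_one_of_mem {u : F4} (hu : u ∈ Subgroup.normalClosure RinfStar) :
    toDihedral u = 1 := by
  have pow_four (g : DihedralGroup 4) : g ^ 4 = 1 := by
    revert g; decide
  suffices Subgroup.normalClosure RinfStar ≤ toDihedral.ker from this hu
  apply Subgroup.normalClosure_le_normal
  rintro r (((hr | ⟨i, rfl⟩) | ⟨i, rfl⟩) | ⟨i, -, rfl⟩) <;>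
    rw [SetLike.mem_coe, MonoidHom.mem_ker]
  · simp only [Set.mem_insert_iff, Set.mem_singleton_iff] at hr
    rcases hr with rfl | rfl | rfl | rfl | rfl <;>
      simp [toDihedral_ga, toDihedral_gb, toDihedral_gc, toDihedral_gd, pow_two]
  · rw [iterate_map_pow, map_pow, pow_four]
  · rw [iterate_map_pow, map_pow, pow_four]
  · rw [iterate_map_pow, map_pow]
    exact toDihedral_iterate_sigma_sq i .a

namespace GrigorchukGroup

/-- The endomorphism of the Grigorchuk group induced by `tau`. -/
def tauEnd : GrigorchukGroup →* GrigorchukGroup :=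
  QuotientGroup.map _ _ tau <| Subgroup.normalClosure_le_normal fun _ hr =>
    (AreaLE.of_mem_conjugatesOfSet (Group.subset_conjugatesOfSet hr)).tau.mem_normalClosure

theorem mk_tau (u : F4) : mk (tau u) = tauEnd (mk u) := rfl

theorem tauEnd_a : tauEnd a = c := by
  rw [← mk_tau, tau_apply, sigma_ga]
  simp only [map_mul, map_inv, a_inv, mul_assoc, a_mul_a, a_mul_a_mul, mul_one]

theorem tauEnd_b : tauEnd b = a * d * a := by
  rw [← mk_tau, tau_apply, sigma_gb, map_mul, map_mul, map_inv, a_inv]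

theorem tauEnd_d : tauEnd d = a * c * a := by
  rw [← mk_tau, tau_apply, sigma_gd, map_mul, map_mul, map_inv, a_inv]

/-- The homomorphism from the dihedral group of order `8` onto the subgroup generated by `a = sr 0`
and `d = sr 1`. -/
def ofDihedral : DihedralGroup 4 →* GrigorchukGroup := dihedralLift a_mul_a d_mul_d a_mul_d_pow_four

theorem ofDihedral_r (i : ZMod 4) : ofDihedral (.r i) = (a * d) ^ i.val := toMul_zmodPowersHom ..

theorem ofDihedral_sr (i : ZMod 4) : ofDihedral (.sr i) = a * (a * d) ^ i.val :=
  congrArg (a * ·) (toMul_zmodPowersHom ..)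

theorem ofDihedral_sr_zero : ofDihedral (.sr 0) = a := by
  rw [ofDihedral_sr, ZMod.val_zero, pow_zero, mul_one]

theorem ofDihedral_sr_one : ofDihedral (.sr 1) = d := by
  rw [ofDihedral_sr, show (1 : ZMod 4).val = 1 from rfl, pow_one, a_mul_a_mul]

theorem mk_phi (u : F4) : mk (phi u) = ofDihedral (toDihedral u) := by
  suffices mk.comp phi = ofDihedral.comp toDihedral from DFunLike.congr_fun this u
  ext x
  cases x <;> simp [phi, toDihedral, ofDihedral_sr_zero, ofDihedral_sr_one]

theorem mk_phi_eq_one {u : F4} (hu : mk u = 1) : mk (phi u) = 1 := by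
  rw [mk_phi, toDihedral_eq_one_of_mem (PresentedGroup.mk_eq_one_iff.1 hu), map_one]

/-- The conjugate of `b` by an element of the dihedral subgroup `⟨a, d⟩`. -/
def dihedralConjB (h : DihedralGroup 4) : GrigorchukGroup := ofDihedral h * b * (ofDihedral h)⁻¹

theorem dihedralConjB_one : dihedralConjB 1 = b := by simp [dihedralConjB]

theorem dihedralConjB_mul (g h : DihedralGroup 4) :
    dihedralConjB (g * h) = ofDihedral g * dihedralConjB h * (ofDihedral g)⁻¹ := by
  simp [dihedralConjB, mul_assoc]

theorem dihedralConjB_mul_sr_one (h : DihedralGroup 4) :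
    dihedralConjB (h * .sr 1) = dihedralConjB h := by
  rw [dihedralConjB, map_mul, ofDihedral_sr_one, mul_inv_rev, mul_assoc _ d, commute_d_b.eq]
  simp only [dihedralConjB, mul_assoc, mul_inv_cancel_left]

theorem tauEnd_dihedralConjB_sr_zero_mul (h : DihedralGroup 4) :
    tauEnd (dihedralConjB (.sr 0 * h)) = c * tauEnd (dihedralConjB h) * c⁻¹ := by
  rw [dihedralConjB_mul, ofDihedral_sr_zero, map_mul, map_mul, map_inv, tauEnd_a]

theorem tauEnd_dihedralConjB_sr_one_mul (h : DihedralGroup 4) :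
    tauEnd (dihedralConjB (.sr 1 * h)) =
      a * c * a * tauEnd (dihedralConjB h) * (a * c * a)⁻¹ := by
  rw [dihedralConjB_mul, ofDihedral_sr_one, map_mul, map_mul, map_inv, tauEnd_d]

theorem commute_d_tauEnd_b : Commute d (tauEnd b) := by
  rw [tauEnd_b]
  refine commute_conj_of_mul_pow_four d_mul_d a_mul_a ?_
  have h := conj_pow (i := 4) (a := a) (b := a * d)
  rwa [a_mul_d_pow_four, mul_one, mul_inv_cancel, a_mul_a_mul, a_inv] at h

theorem commute_d_conj_acaca : Commute d ((a * c * a * c * a) * d * (a * c * a * c * a)) := by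
  refine commute_conj_of_mul_pow_four d_mul_d ?_ ?_
  · simp only [mul_assoc, a_mul_a_mul, c_mul_c_mul, a_mul_a]
  · have h := conj_pow (i := 4) (a := a) (b := a * d * a * c * a * c)
    rw [adacac_pow_four, mul_one, mul_inv_cancel, a_inv] at h
    simpa only [mul_assoc, a_mul_a_mul] using h

-- Since `d` commutes with `c = τ(a)` and with `b`, only the double coset of `h` modulo `⟨a⟩` and
-- `⟨d⟩` matters; the cosets of `1` and `da` give the relations `(ad)⁴ = 1` and `(adacac)⁴ = 1`.
theorem commute_d_tauEnd_dihedralConjB (h : DihedralGroup 4) :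
    Commute d (tauEnd (dihedralConjB h)) := by
  have sr_zero_mul {h : DihedralGroup 4} (hh : Commute d (tauEnd (dihedralConjB h))) :
      Commute d (tauEnd (dihedralConjB (.sr 0 * h))) := by
    rw [tauEnd_dihedralConjB_sr_zero_mul]
    exact (commute_d_c.mul_right hh).mul_right commute_d_c.inv_right
  have mul_sr_one {h : DihedralGroup 4} (hh : Commute d (tauEnd (dihedralConjB h))) :
      Commute d (tauEnd (dihedralConjB (h * .sr 1))) := by
    rwa [dihedralConjB_mul_sr_one]
  have commute_one : Commute d (tauEnd (dihedralConjB 1)) := by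
    rw [dihedralConjB_one]
    exact commute_d_tauEnd_b
  have commute_da : Commute d (tauEnd (dihedralConjB (.sr 1 * (.sr 0 * 1)))) := by
    rw [tauEnd_dihedralConjB_sr_one_mul, tauEnd_dihedralConjB_sr_zero_mul, dihedralConjB_one,
      tauEnd_b]
    simpa only [mul_inv_rev, a_inv, c_inv, mul_assoc] using commute_d_conj_acaca
  have cases_doubleCoset : ∀ h : DihedralGroup 4, ∃ k ∈ [1, .sr 1 * (.sr 0 * 1)],
      h ∈ [k, .sr 0 * k, k * .sr 1, .sr 0 * (k * .sr 1)] := by decide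
  obtain ⟨k, hk, hh⟩ := cases_doubleCoset h
  have commute_k : Commute d (tauEnd (dihedralConjB k)) := by
    simp only [List.mem_cons, List.not_mem_nil, or_false] at hk
    rcases hk with rfl | rfl
    exacts [commute_one, commute_da]
  simp only [List.mem_cons, List.not_mem_nil, or_false] at hh
  rcases hh with rfl | rfl | rfl | rfl
  · exact commute_k
  · exact sr_zero_mul commute_k
  · exact mul_sr_one commute_k
  · exact sr_zero_mul (mul_sr_one commute_k)

theorem mk_sigma_of_mul_tauEnd_dihedralConjB (x : L4) (h : DihedralGroup 4) :
    mk (sigma (.of x)) * tauEnd (dihedralConjB h) =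
      tauEnd (dihedralConjB (toDihedral (.of x) * h)) * mk (sigma (.of x)) := by
  cases x
  · rw [freeGroup_of_a, toDihedral_ga, tauEnd_dihedralConjB_sr_one_mul, sigma_ga, map_mul, map_mul,
      inv_mul_cancel_right]
  · rw [freeGroup_of_b, toDihedral_gb, one_mul, sigma_gb]
    exact commute_d_tauEnd_dihedralConjB h
  · rw [freeGroup_of_c, toDihedral_gc, tauEnd_dihedralConjB_sr_zero_mul, sigma_gc,
      ← mul_inv_eq_iff_eq_mul]
    change b * _ * b⁻¹ = _
    rw [b_eq, mul_assoc c, (commute_d_tauEnd_dihedralConjB h).eq]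
    simp only [mul_assoc, mul_inv_rev, mul_inv_cancel_left]
  · rw [freeGroup_of_d, toDihedral_gd, tauEnd_dihedralConjB_sr_zero_mul, sigma_gd,
      inv_mul_cancel_right]

theorem mk_sigma_mul_tauEnd_dihedralConjB (u : F4) (h : DihedralGroup 4) :
    mk (sigma u) * tauEnd (dihedralConjB h) =
      tauEnd (dihedralConjB (toDihedral u * h)) * mk (sigma u) := by
  induction u using FreeGroup.induction_on generalizing h with
  | C1 => simp
  | of x => exact mk_sigma_of_mul_tauEnd_dihedralConjB x h
  | inv_of x hx =>
    have h' := hx ((toDihedral (.of x))⁻¹ * h)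
    rw [mul_inv_cancel_left] at h'
    rw [map_inv, map_inv, map_inv, inv_mul_eq_iff_eq_mul, ← mul_assoc, h', mul_inv_cancel_right]
  | mul u v hu hv =>
    rw [map_mul, map_mul, map_mul, mul_assoc, hv, ← mul_assoc, hu, mul_assoc, mul_assoc]

/-! ### Sections of words -/

/-- The value in the free group of a positive word. -/
def evalWord (w : List L4) : F4 := (w.map FreeGroup.of).prod

theorem evalWord_nil : evalWord [] = 1 := rfl

theorem evalWord_cons (x : L4) (w : List L4) : evalWord (x :: w) = .of x * evalWord w := by
  simp [evalWord]

theorem evalWord_append (v w : List L4) : evalWord (v ++ w) = evalWord v * evalWord w := by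
  simp [evalWord]

/-- The state of the Grigorchuk automaton after reading a letter. The states are the two vertices of
the first level of the binary tree. -/
def nextChild (i : Bool) : L4 → Bool
  | .a => !i
  | _ => i

/-- The output of the Grigorchuk automaton, that is, the section of a letter at the vertex `i`. -/
def letterSection : Bool → L4 → List L4
  | _, .a => []
  | false, .b => [.c]
  | false, .c => [.d]
  | false, .d => [.b]
  | true, .b => [.a]
  | true, .c => [.a]
  | true, .d => []

/-- The section of a word at the vertex `i` of the first level. -/
def wordSection (i : Bool) : List L4 → List L4
  | [] => []
  | x :: w => letterSection i x ++ wordSection (nextChild i x) w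

/-- The vertex of the first level that a word carries to `i`. -/
def lastChild (i : Bool) : List L4 → Bool
  | [] => i
  | x :: w => lastChild (nextChild i x) w

theorem mk_of_mul_self (x : L4) : mk (.of x) * mk (.of x) = 1 := by
  cases x
  exacts [a_mul_a, b_mul_b, c_mul_c, d_mul_d]

theorem mk_letterSection_mul_self (i : Bool) (x : L4) :
    mk (evalWord (letterSection i x)) * mk (evalWord (letterSection i x)) = 1 := by
  cases i <;> cases x <;> simp [letterSection, evalWord, mk_of_mul_self]

/-- The action of a letter on two copies of the Grigorchuk group, given by its sections. -/
def letterPerm (x : L4) : Equiv.Perm (Bool × GrigorchukGroup) :=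
  Function.Involutive.toPerm
    (fun p => (nextChild p.1 x, mk (evalWord (letterSection p.1 x)) * p.2)) fun ⟨i, g⟩ => by
    have h := mul_mul_cancel_of_mul_self (mk_letterSection_mul_self i x) g
    cases x with
    | a => simp [nextChild, letterSection, evalWord]
    | _ => simpa [nextChild] using h

/-- The action of the free group on two copies of the Grigorchuk group, given by the sections at the
two vertices of the first level. -/
def levelAction : F4 →* Equiv.Perm (Bool × GrigorchukGroup) := FreeGroup.lift letterPerm

theorem levelAction_ga (i : Bool) (g : GrigorchukGroup) : levelAction ga (i, g) = (!i, g) := by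
  simp [ga, levelAction, letterPerm, nextChild, letterSection, evalWord]

theorem levelAction_gb (i : Bool) (g : GrigorchukGroup) :
    levelAction gb (i, g) = (i, (bif i then a else c) * g) := by
  cases i <;> simp [a, c, ga, gb, gc, levelAction, letterPerm, nextChild, letterSection, evalWord]

theorem levelAction_gc (i : Bool) (g : GrigorchukGroup) :
    levelAction gc (i, g) = (i, (bif i then a else d) * g) := by
  cases i <;> simp [a, d, ga, gc, gd, levelAction, letterPerm, nextChild, letterSection, evalWord]

theorem levelAction_gd (i : Bool) (g : GrigorchukGroup) :
    levelAction gd (i, g) = (i, (bif i then 1 else b) * g) := by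
  cases i <;> simp [b, gb, gd, levelAction, letterPerm, nextChild, letterSection, evalWord]

theorem levelAction_of (x : L4) (i : Bool) (g : GrigorchukGroup) :
    levelAction (.of x) (nextChild i x, g) = (i, mk (evalWord (letterSection i x)) * g) := by
  cases x <;> simp [levelAction, letterPerm, nextChild, letterSection]

theorem levelAction_evalWord (w : List L4) (i : Bool) (g : GrigorchukGroup) :
    levelAction (evalWord w) (lastChild i w, g) = (i, mk (evalWord (wordSection i w)) * g) := by
  induction w generalizing i with
  | nil => simp [evalWord_nil, lastChild, wordSection]
  | cons x w ih =>
    rw [evalWord_cons, map_mul, Equiv.Perm.mul_apply, lastChild, ih, levelAction_of, wordSection,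
      evalWord_append, map_mul, mul_assoc]

/-- The section of `σ(u)` at the vertex `i` of the first level. -/
def sigmaSection : Bool → F4 →* F4
  | false => .id F4
  | true => phi

theorem levelAction_sigma (u : F4) (i : Bool) (g : GrigorchukGroup) :
    levelAction (sigma u) (i, g) = (i, mk (sigmaSection i u) * g) := by
  induction u using FreeGroup.induction_on generalizing g with
  | C1 => simp
  | of x =>
    cases i <;> cases x <;>
      simp [freeGroup_of_a, freeGroup_of_b, freeGroup_of_c, freeGroup_of_d, sigma_ga, sigma_gb,
        sigma_gc, sigma_gd, sigmaSection, phi_ga, phi_gb, phi_gc, phi_gd, levelAction_ga,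
        levelAction_gb, levelAction_gc, levelAction_gd]
  | inv_of x hx =>
    rw [map_inv, map_inv, map_inv, map_inv, Equiv.Perm.inv_eq_iff_eq, hx, mul_inv_cancel_left]
  | mul u v hu hv =>
    rw [map_mul, map_mul, map_mul, map_mul, Equiv.Perm.mul_apply, hv, hu, mul_assoc]

theorem mk_sigmaSection_eq_one {u : F4} (hu : mk u = 1) (i : Bool) : mk (sigmaSection i u) = 1 := by
  cases i
  · exact hu
  · exact mk_phi_eq_one hu

theorem levelAction_eq_one {u : F4} (hu : mk u = 1) : levelAction u = 1 := by
  suffices Subgroup.normalClosure RinfStar ≤ levelAction.ker from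
    this (PresentedGroup.mk_eq_one_iff.1 hu)
  refine Subgroup.normalClosure_le_normal fun r hr => MonoidHom.mem_ker.2 <| Equiv.ext ?_
  rintro ⟨i, g⟩
  rcases mem_RinfStar_cases hr with hr | ⟨s, hs, rfl⟩
  · simp only [Set.mem_insert_iff, Set.mem_singleton_iff] at hr
    rcases hr with rfl | rfl | rfl | rfl | rfl | rfl | rfl <;> cases i <;>
      simp [pow_succ, levelAction_ga, levelAction_gb, levelAction_gc, levelAction_gd, b_eq,
        mul_assoc, a_mul_a_mul, c_mul_c_mul, d_mul_d_mul, d_mul_c_mul]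
  · rw [levelAction_sigma, mk_sigmaSection_eq_one (PresentedGroup.one_of_mem hs), one_mul]
    rfl

theorem lastChild_eq_of_mk_eq_one {w : List L4} (hw : mk (evalWord w) = 1) (i : Bool) :
    lastChild i w = i := by
  have h := levelAction_evalWord w i 1
  rw [levelAction_eq_one hw] at h
  exact congrArg Prod.fst h

theorem mk_wordSection_eq_one {w : List L4} (hw : mk (evalWord w) = 1) (i : Bool) :
    mk (evalWord (wordSection i w)) = 1 := by
  have h := levelAction_evalWord w i 1
  rw [levelAction_eq_one hw, mul_one] at h
  exact (congrArg Prod.snd h).symm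

/-! ### Collecting the conjugates of `b` -/

/-- A word in `a` and `d` representing an element of the dihedral subgroup. -/
def dihedralRep : DihedralGroup 4 → F4
  | .r i => (ga * gd) ^ i.val
  | .sr i => ga * (ga * gd) ^ i.val

theorem dihedralRep_one : dihedralRep 1 = 1 := pow_zero _

theorem mk_dihedralRep (h : DihedralGroup 4) : mk (dihedralRep h) = ofDihedral h := by
  cases h with
  | r i => rw [ofDihedral_r, dihedralRep, map_pow, map_mul]
  | sr i => rw [ofDihedral_sr, dihedralRep, map_mul, map_pow, map_mul]

/-- The lift of `dihedralConjB` to the free group. -/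
def conjB (h : DihedralGroup 4) : F4 := dihedralRep h * gb * (dihedralRep h)⁻¹

theorem conjB_one : conjB 1 = gb := by simp [conjB, dihedralRep_one]

theorem mk_conjB (h : DihedralGroup 4) : mk (conjB h) = dihedralConjB h := by
  rw [conjB, map_mul, map_mul, map_inv, mk_dihedralRep, dihedralConjB]

/-- The product of the conjugates of `b` indexed by a list in the dihedral group. -/
def prodConjB (l : List (DihedralGroup 4)) : F4 := (l.map conjB).prod

theorem prodConjB_append (l l' : List (DihedralGroup 4)) :
    prodConjB (l ++ l') = prodConjB l * prodConjB l' := by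
  simp [prodConjB]

/-- The correction by conjugates of `b` needed to express a letter, read at the vertex `i`, as the
image under `σ` of its section at `i`. -/
def letterCorrection : Bool → L4 → List (DihedralGroup 4)
  | true, .b => [1]
  | true, .d => [1]
  | _, _ => []

/-- The indices of the conjugates of `b` that remain on the left after all the images under `σ` of
the sections of the letters of a word have been moved to its right end. -/
def correction (i : Bool) : List L4 → List (DihedralGroup 4)
  | [] => []
  | x :: w => letterCorrection i x ++
      (correction (nextChild i x) w).map (toDihedral (evalWord (letterSection i x)) * ·)

theorem length_letterCorrection_le (i : Bool) (x : L4) : (letterCorrection i x).length ≤ 1 := by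
  cases i <;> cases x <;> simp [letterCorrection]

theorem length_correction_le (i : Bool) (w : List L4) : (correction i w).length ≤ w.length := by
  induction w generalizing i with
  | nil => exact le_rfl
  | cons x w ih =>
    have := length_letterCorrection_le i x
    have := ih (nextChild i x)
    rw [correction, List.length_append, List.length_map, List.length_cons]
    lia

/-- The product of the values of `T` along the run of the Grigorchuk automaton on a word. -/
def prodAlong (T : Bool → L4 → F4) (i : Bool) : List L4 → F4
  | [] => 1
  | x :: w => T i x * prodAlong T (nextChild i x) w

instance : Fintype L4 := ⟨{.a, .b, .c, .d}, fun x => by cases x <;> decide⟩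

section Collect

variable {f g : F4 →* F4} {T : Bool → L4 → F4}

theorem exists_areaEquiv_mul_prodConjB
    (hconj : ∀ u h, mk (f u) * mk (g (conjB h)) = mk (g (conjB (toDihedral u * h))) * mk (f u)) :
    ∃ K, ∀ i x l, AreaEquiv RinfStar (K * l.length)
      (f (evalWord (letterSection i x)) * g (prodConjB l))
      (g (prodConjB (l.map (toDihedral (evalWord (letterSection i x)) * ·))) *
        f (evalWord (letterSection i x))) := by
  obtain ⟨K, hK⟩ := exists_forall_areaEquiv (rels := RinfStar) (ι := Bool × L4 × DihedralGroup 4)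
    (u := fun p => f (evalWord (letterSection p.1 p.2.1)) * g (conjB p.2.2))
    (v := fun p => g (conjB (toDihedral (evalWord (letterSection p.1 p.2.1)) * p.2.2)) *
      f (evalWord (letterSection p.1 p.2.1)))
    fun p => by rw [map_mul, map_mul, hconj]
  refine ⟨K, fun i x l => ?_⟩
  simpa [prodConjB, map_list_prod, Function.comp_def] using
    AreaEquiv.mul_list_prod (fun h => hK (i, x, h)) l

-- Moving `f` of the section of a letter past the at most `|w|` corrections on its right costs
-- `O(|w|)`, so collecting all of them costs `O(|w|²)`.
theorem exists_areaEquiv_prodAlong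
    (hconj : ∀ u h, mk (f u) * mk (g (conjB h)) = mk (g (conjB (toDihedral u * h))) * mk (f u))
    (hT : ∀ i x, mk (T i x) =
      mk (g (prodConjB (letterCorrection i x)) * f (evalWord (letterSection i x)))) :
    ∃ K, ∀ i w, AreaEquiv RinfStar (K * w.length ^ 2) (prodAlong T i w)
      (g (prodConjB (correction i w)) * f (evalWord (wordSection i w))) := by
  obtain ⟨K₁, hK₁⟩ := exists_forall_areaEquiv fun p : Bool × L4 => hT p.1 p.2
  obtain ⟨K₂, hK₂⟩ := exists_areaEquiv_mul_prodConjB hconj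
  refine ⟨K₁ + K₂, fun i w => ?_⟩
  induction w generalizing i with
  | nil => exact .of_eq (by simp [prodAlong, correction, wordSection, prodConjB, evalWord]) _
  | cons x w ih =>
    set j := nextChild i x
    set u := evalWord (letterSection i x)
    have move_left := hK₂ i x (correction j w)
    have length_le := length_correction_le j w
    rw [prodAlong, correction, wordSection, prodConjB_append, evalWord_append, map_mul, map_mul]
    refine AreaEquiv.mono (m := K₁ + (K₁ + K₂) * w.length ^ 2 + K₂ * (correction j w).length) ?_ ?_
    · calc
        AreaEquiv RinfStar (K₁ + (K₁ + K₂) * w.length ^ 2) (T i x * prodAlong T j w)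
            (g (prodConjB (letterCorrection i x)) * f u *
              (g (prodConjB (correction j w)) * f (evalWord (wordSection j w)))) :=
          (hK₁ (i, x)).mul (ih j)
        AreaEquiv RinfStar (K₂ * (correction j w).length) _ _ := by
          simpa only [mul_assoc] using
            (move_left.mul_right (f (evalWord (wordSection j w)))).mul_left
              (g (prodConjB (letterCorrection i x)))
    · rw [List.length_cons]
      nlinarith

end Collect

/-- The coset representative of the stabilizer of the first level that carries `false` to `i`. -/
def childRep : Bool → F4
  | false => 1
  | true => ga

theorem prodAlong_childRep (i : Bool) (w : List L4) :
    prodAlong (fun i x => childRep i * .of x * (childRep (nextChild i x))⁻¹) i w =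
      childRep i * evalWord w * (childRep (lastChild i w))⁻¹ := by
  induction w generalizing i with
  | nil => simp [prodAlong, evalWord, lastChild]
  | cons x w ih =>
    rw [prodAlong, ih, evalWord_cons, lastChild]
    group

theorem nextChild_not (i : Bool) (x : L4) : nextChild (!i) x = !nextChild i x := by
  cases x <;> rfl

theorem prodAlong_letterSection_not (i : Bool) (w : List L4) :
    prodAlong (fun i x => evalWord (letterSection (!i) x)) i w = evalWord (wordSection (!i) w) := by
  induction w generalizing i with
  | nil => rfl
  | cons x w ih => rw [prodAlong, ih, wordSection, evalWord_append, nextChild_not]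

theorem mk_childRep_mul_of (i : Bool) (x : L4) :
    mk (childRep i * .of x * (childRep (nextChild i x))⁻¹) =
      mk (tau (prodConjB (letterCorrection i x)) * sigma (evalWord (letterSection i x))) := by
  have d_mul_c_mul_a : d * (c * a) = b * a := by rw [b_eq, mul_assoc, d_mul_c_mul]
  cases i <;> cases x <;>
    simp [childRep, nextChild, letterCorrection, letterSection, prodConjB, evalWord, conjB_one,
      mk_tau, tauEnd_b, freeGroup_of_a, freeGroup_of_b, freeGroup_of_c, freeGroup_of_d, sigma_ga,
      sigma_gb, sigma_gc, sigma_gd, a_inv, a_mul_a, a_mul_a_mul, d_mul_c_mul_a,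
      mul_assoc]

theorem mk_letterSection_not (i : Bool) (x : L4) :
    mk (evalWord (letterSection (!i) x)) =
      mk (prodConjB (letterCorrection i x) * phi (evalWord (letterSection i x))) := by
  cases i <;> cases x <;>
    simp [letterCorrection, letterSection, prodConjB, evalWord, conjB_one, freeGroup_of_a,
      freeGroup_of_b, freeGroup_of_c, freeGroup_of_d, phi_ga, phi_gb, phi_gc, phi_gd, b_eq,
      d_mul_d, mul_assoc]

theorem exists_areaEquiv_tau_mul_sigma :
    ∃ K, ∀ i w, AreaEquiv RinfStar (K * w.length ^ 2)
      (childRep i * evalWord w * (childRep (lastChild i w))⁻¹)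
      (tau (prodConjB (correction i w)) * sigma (evalWord (wordSection i w))) := by
  simp only [← prodAlong_childRep]
  refine exists_areaEquiv_prodAlong (fun u h => ?_) mk_childRep_mul_of
  simp only [mk_tau, mk_conjB, mk_sigma_mul_tauEnd_dihedralConjB]

theorem exists_areaEquiv_mul_phi :
    ∃ K, ∀ i w, AreaEquiv RinfStar (K * w.length ^ 2) (evalWord (wordSection (!i) w))
      (prodConjB (correction i w) * phi (evalWord (wordSection i w))) := by
  simp only [← prodAlong_letterSection_not]
  refine exists_areaEquiv_prodAlong (g := .id F4) (fun u h => ?_) mk_letterSection_not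
  simp only [MonoidHom.id_apply, mk_conjB, mk_phi, dihedralConjB_mul, inv_mul_cancel_right]

theorem exists_areaEquiv_phi_dihedralRep :
    ∃ K, ∀ w, AreaEquiv RinfStar (K * w.length) (phi (evalWord w))
      (dihedralRep (toDihedral (evalWord w))) := by
  obtain ⟨K, hK⟩ := exists_forall_areaEquiv (rels := RinfStar) (ι := L4 × DihedralGroup 4)
    (u := fun p => phi (.of p.1) * dihedralRep p.2)
    (v := fun p => dihedralRep (toDihedral (.of p.1) * p.2))
    fun p => by rw [map_mul, mk_phi, mk_dihedralRep, mk_dihedralRep, map_mul]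
  refine ⟨K, fun w => ?_⟩
  induction w with
  | nil => simpa [evalWord, dihedralRep_one] using AreaEquiv.refl (R := RinfStar) (1 : F4)
  | cons x w ih =>
    rw [evalWord_cons, map_mul, map_mul, List.length_cons, mul_add_one]
    exact (ih.mul_left (phi (.of x))).trans (hK (x, _))

theorem exists_areaLE_phi :
    ∃ K, ∀ w, mk (evalWord w) = 1 → AreaLE RinfStar (K * w.length) (phi (evalWord w)) := by
  obtain ⟨K, hK⟩ := exists_areaEquiv_phi_dihedralRep
  refine ⟨K, fun w hw => ?_⟩
  have h := hK w
  rw [toDihedral_eq_one_of_mem (PresentedGroup.mk_eq_one_iff.1 hw), dihedralRep_one] at h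
  exact h.areaLE (.one 0)

-- With `V` the product of corrections, `w ≈ τ(V) σ(w₀)` and `V ≈ w₁ φ(w₀)⁻¹`, where `w₀` and `w₁`
-- are the sections of `w`.
theorem exists_areaLE_of_wordSection :
    ∃ K, ∀ w m n, mk (evalWord w) = 1 → (wordSection false w).length ≤ w.length →
      AreaLE RinfStar m (evalWord (wordSection false w)) →
      AreaLE RinfStar n (evalWord (wordSection true w)) →
      AreaLE RinfStar (m + n + K * w.length ^ 2) (evalWord w) := by
  obtain ⟨K₁, hK₁⟩ := exists_areaEquiv_tau_mul_sigma
  obtain ⟨K₂, hK₂⟩ := exists_areaEquiv_mul_phi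
  obtain ⟨K₃, hK₃⟩ := exists_areaLE_phi
  refine ⟨K₁ + K₂ + K₃, fun w m n hw length_le hm hn => ?_⟩
  set w₀ := wordSection false w
  set w₁ := wordSection true w
  set V := prodConjB (correction false w)
  have split : AreaEquiv RinfStar (K₁ * w.length ^ 2) (evalWord w)
      (tau V * sigma (evalWord w₀)) := by
    simpa [lastChild_eq_of_mk_eq_one hw, childRep] using hK₁ false w
  have area_phi : AreaLE RinfStar (K₃ * w₀.length) (phi (evalWord w₀)) :=
    hK₃ w₀ (mk_wordSection_eq_one hw false)
  have area_V : AreaLE RinfStar (K₂ * w.length ^ 2 + n + K₃ * w₀.length) V := by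
    have h := ((hK₂ false w).symm.areaLE hn).mul area_phi.inv
    rwa [mul_inv_cancel_right] at h
  refine (split.areaLE (area_V.tau.mul hm.sigma)).mono ?_
  have : w₀.length ≤ w.length ^ 2 := by nlinarith
  nlinarith

/-! ### Alternating words and the recursion -/

/-- Words in which the letter `a` alternates with the letters `b`, `c`, `d`. -/
def IsAlternating (w : List L4) : Prop := w.IsChain fun x y => x = .a ↔ y ≠ .a

theorem length_letterSection_le (i : Bool) (x : L4) : (letterSection i x).length ≤ 1 := by
  cases i <;> cases x <;> simp [letterSection]

theorem two_mul_length_wordSection_le (i : Bool) {w : List L4} (hw : IsAlternating w) :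
    2 * (wordSection i w).length ≤ w.length + 1 := by
  induction w using List.twoStepInduction generalizing i with
  | nil => simp [wordSection]
  | singleton x => simpa [wordSection] using length_letterSection_le i x
  | cons_cons x y w ih _ =>
    rw [IsAlternating, List.isChain_cons_cons] at hw
    have length_pair : (letterSection i x).length +
        (letterSection (nextChild i x) y).length ≤ 1 := by
      by_cases hx : x = .a
      · subst hx
        simpa [letterSection] using length_letterSection_le _ y
      · obtain rfl : y = .a := by simpa [hx] using hw.1
        simpa [letterSection] using length_letterSection_le i x
    have := ih (nextChild (nextChild i x) y) hw.2.tail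
    simp only [wordSection, List.length_append, List.length_cons]
    lia

/-- The product of two letters, shortened when both belong to `⟨a⟩` or both to `⟨b, c, d⟩`. -/
def mulLetters : L4 → L4 → List L4
  | .a, .a => []
  | .b, .b => []
  | .c, .c => []
  | .d, .d => []
  | .b, .c => [.d]
  | .c, .b => [.d]
  | .b, .d => [.c]
  | .d, .b => [.c]
  | .c, .d => [.b]
  | .d, .c => [.b]
  | x, y => [x, y]

theorem mk_evalWord_mulLetters (x y : L4) :
    mk (evalWord (mulLetters x y)) = mk (evalWord [x, y]) := by
  cases x <;> cases y <;>
    simp [mulLetters, evalWord, freeGroup_of_a, freeGroup_of_b, freeGroup_of_c, freeGroup_of_d,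
      a_mul_a, b_eq, c_mul_c, d_mul_d, commute_d_c.eq, mul_assoc, c_mul_c_mul, d_mul_c_mul]

/-- Left multiplication of a word by a letter, shortening the first two letters if possible. -/
def consLetter (x : L4) : List L4 → List L4
  | [] => [x]
  | y :: w => mulLetters x y ++ w

theorem length_mulLetters_le (x y : L4) : (mulLetters x y).length ≤ 2 := by
  cases x <;> cases y <;> simp [mulLetters]

theorem length_consLetter_le (x : L4) (w : List L4) : (consLetter x w).length ≤ w.length + 1 := by
  cases w with
  | nil => rfl
  | cons y w =>
    have := length_mulLetters_le x y
    simp only [consLetter, List.length_append, List.length_cons]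
    lia

theorem IsAlternating.consLetter (x : L4) {w : List L4} (hw : IsAlternating w) :
    IsAlternating (consLetter x w) := by
  cases w with
  | nil => exact .singleton x
  | cons y w =>
    rw [IsAlternating, List.isChain_cons] at *
    cases x <;> cases y <;> simp_all [GrigorchukGroup.consLetter, mulLetters, List.isChain_cons]

theorem exists_areaEquiv_consLetter :
    ∃ K, ∀ x w, AreaEquiv RinfStar K (.of x * evalWord w) (evalWord (consLetter x w)) := by
  obtain ⟨K, hK⟩ := exists_forall_areaEquiv fun p : L4 × L4 =>
    (mk_evalWord_mulLetters p.1 p.2).symm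
  refine ⟨K, fun x w => ?_⟩
  cases w with
  | nil => exact .of_eq rfl K
  | cons y w =>
    simpa only [consLetter, evalWord_append, evalWord_cons, evalWord_nil, mul_one, mul_assoc]
      using (hK (x, y)).mul_right (evalWord w)

theorem exists_areaEquiv_isAlternating :
    ∃ K, ∀ w, ∃ w', IsAlternating w' ∧ w'.length ≤ w.length ∧
      AreaEquiv RinfStar (K * w.length) (evalWord w) (evalWord w') := by
  obtain ⟨K, hK⟩ := exists_areaEquiv_consLetter
  refine ⟨K, fun w => ?_⟩
  induction w with
  | nil => exact ⟨[], .nil, le_rfl, .refl _⟩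
  | cons x w ih =>
    obtain ⟨w', alternating, length_le, equiv⟩ := ih
    refine ⟨consLetter x w', alternating.consLetter x,
      (length_consLetter_le x w').trans (Nat.succ_le_succ length_le), ?_⟩
    rw [evalWord_cons, List.length_cons, mul_add_one]
    exact (equiv.mul_left (.of x)).trans (hK x w')

theorem exists_areaEquiv_evalWord_map_fst :
    ∃ K, ∀ l : List (L4 × Bool),
      AreaEquiv RinfStar (K * l.length) (FreeGroup.mk l) (evalWord (l.map Prod.fst)) := by
  obtain ⟨K, hK⟩ := exists_forall_areaEquiv (rels := RinfStar) (ι := L4 × Bool)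
    (u := fun p => cond p.2 (.of p.1) (.of p.1)⁻¹) (v := fun p => .of p.1) <| by
    rintro ⟨x, _ | _⟩
    · simpa [inv_eq_iff_mul_eq_one] using mk_of_mul_self x
    · rfl
  refine ⟨K, fun l => ?_⟩
  simpa [evalWord, Function.comp_def, ← FreeGroup.lift_mk, FreeGroup.lift_of_eq_id]
    using AreaEquiv.list_prod hK l

theorem exists_areaLE_of_length_le (k : ℕ) :
    ∃ K, ∀ w, w.length ≤ k → mk (evalWord w) = 1 →
      AreaLE RinfStar (K * w.length ^ 2) (evalWord w) := by
  have : Finite {w : List L4 | w.length ≤ k ∧ mk (evalWord w) = 1} :=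
    (List.finite_length_le L4 k).subset fun _ => And.left
  obtain ⟨K, hK⟩ := exists_forall_areaLE (R := RinfStar)
    (w := fun w : {w : List L4 | w.length ≤ k ∧ mk (evalWord w) = 1} => evalWord w)
    fun w => PresentedGroup.mk_eq_one_iff.1 w.2.2
  refine ⟨K, fun w length_le hw => ?_⟩
  cases w with
  | nil => exact .one _
  | cons x w => exact (hK ⟨_, length_le, hw⟩).mono (Nat.le_mul_of_pos_right K (by simp))

theorem mul_sq_add_mul_sq_add_mul_sq_le {C K m₀ m₁ n : ℕ} (hC : 9 * C ≤ K) (hn : 3 ≤ n)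
    (hm₀ : 2 * m₀ ≤ n + 1) (hm₁ : 2 * m₁ ≤ n + 1) :
    K * m₀ ^ 2 + K * m₁ ^ 2 + C * n ^ 2 ≤ K * n ^ 2 := by
  have sq_le {m : ℕ} (hm : 2 * m ≤ n + 1) : 9 * m ^ 2 ≤ 4 * n ^ 2 := by
    have : 3 * m ≤ 2 * n := by lia
    nlinarith
  have := Nat.mul_le_mul_left K (sq_le hm₀)
  have := Nat.mul_le_mul_left K (sq_le hm₁)
  have := Nat.mul_le_mul_right (n ^ 2) hC
  lia

-- The constant `9` absorbs the quadratic cost of a splitting: for `n ≥ 3` the sections have length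
-- at most `(n + 1) / 2 ≤ 2 n / 3`, and `2 (2 / 3)² = 1 - 1 / 9`.
theorem exists_areaLE_mul_sq :
    ∃ K, ∀ w, mk (evalWord w) = 1 → AreaLE RinfStar (K * w.length ^ 2) (evalWord w) := by
  obtain ⟨K₁, normalize⟩ := exists_areaEquiv_isAlternating
  obtain ⟨K₂, split⟩ := exists_areaLE_of_wordSection
  obtain ⟨K₃, short⟩ := exists_areaLE_of_length_le 2
  refine ⟨9 * (K₁ + K₂) + K₃, fun w hw => ?_⟩
  induction hn : w.length using Nat.strong_induction_on generalizing w with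
  | h n ih =>
  obtain ⟨v, alternating, length_le, equiv⟩ := normalize w
  have hv : mk (evalWord v) = 1 :=
    (presentedGroup_mk_eq_mk_iff.2 ⟨_, equiv⟩).symm.trans hw
  rw [hn] at length_le equiv
  have linear_le : K₁ * n ≤ K₁ * n ^ 2 := Nat.mul_le_mul_left K₁ (Nat.le_self_pow two_ne_zero n)
  have sq_le : v.length ^ 2 ≤ n ^ 2 := Nat.pow_le_pow_left length_le 2
  rcases le_or_gt v.length 2 with length_le_two | two_lt_length
  · refine (equiv.areaLE (short v length_le_two hv)).mono ?_
    nlinarith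
  · have half_length (i : Bool) : 2 * (wordSection i v).length ≤ v.length + 1 :=
      two_mul_length_wordSection_le i alternating
    have area_section (i : Bool) :=
      ih _ (by have := half_length i; lia) (wordSection i v) (mk_wordSection_eq_one hv i) rfl
    have half_length_false := half_length false
    have half_length_true := half_length true
    refine (equiv.areaLE (split v _ _ hv (by lia) (area_section false) (area_section true))).mono ?_
    have := mul_sq_add_mul_sq_add_mul_sq_le (C := K₁ + K₂) (K := 9 * (K₁ + K₂) + K₃) (n := n)
      (Nat.le_add_right _ _) (by lia) (half_length_false.trans (by lia))
      (half_length_true.trans (by lia))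
    nlinarith

end GrigorchukGroup

open GrigorchukGroup in
theorem exists_areaLE_mul_norm_sq :
    ∃ K, ∀ W ∈ Subgroup.normalClosure RinfStar,
      AreaLE RinfStar (K * FreeGroup.norm W ^ 2) W := by
  obtain ⟨K₁, toPositive⟩ := exists_areaEquiv_evalWord_map_fst
  obtain ⟨K₂, area_le⟩ := exists_areaLE_mul_sq
  refine ⟨K₁ + K₂, fun W hW => ?_⟩
  have equiv := toPositive W.toWord
  rw [FreeGroup.mk_toWord] at equiv
  have mk_eq_one : mk (evalWord (W.toWord.map Prod.fst)) = 1 :=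
    (presentedGroup_mk_eq_mk_iff.2 ⟨_, equiv⟩).symm.trans (PresentedGroup.mk_eq_one_iff.2 hW)
  refine (equiv.areaLE (area_le _ mk_eq_one)).mono ?_
  rw [List.length_map, ← FreeGroup.norm, add_mul]
  gcongr
  exact Nat.le_self_pow two_ne_zero _

/-- the Dehn 2-function of the presentation `⟨a,b,c,d ∥ R*(∞)⟩`
of the Grigorchuk 2-group is bounded from above by a quadratic function. -/
theorem grigorchuk_star_dehn_quadratic :
    ∃ C : ℝ, 1 < C ∧
      ∀ x : ℕ, 1 ≤ x →
        ∀ W ∈ Subgroup.normalClosure Rinf, FreeGroup.norm W ≤ x →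
          ∃ L : ℕ, (L : ℝ) ≤ C * (x : ℝ) ^ 2 ∧ IsProdConjPM RinfStar L W := by
  obtain ⟨K, hK⟩ := exists_areaLE_mul_norm_sq
  refine ⟨K + 2, by linarith [K.cast_nonneg (α := ℝ)], fun x _ W hW norm_le => ?_⟩
  obtain ⟨L, L_le, isProd⟩ := hK W (Subgroup.normalClosure_mono Set.subset_union_left hW)
  refine ⟨L, ?_, isProd⟩
  calc (L : ℝ) ≤ K * (FreeGroup.norm W : ℝ) ^ 2 := mod_cast L_le
    _ ≤ (K + 2) * (x : ℝ) ^ 2 := by gcongr; linarith
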